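/- arXiv:1908.09855 — 2 statements merged into one kernel-verified Lean document; each statement's English description precedes it below -/
import Mathlib

section
/- (Theorem 1) Let $n \geq 6$ be an even natural number, let $R = \frac{n(n-1)}{2}$, and let $0 < \varepsilon < 1$. Let $\mathcal{P}$ be a finite family of independent, uniformly distributed random 2-partitions of an $n$-element set $V$. If $|\mathcal{P}| \geq n^2\,(2\log R - \log\varepsilon)$, then the probability that every pair of disjoint 2-element subsets $r, r'$ of $V$ simultaneously appears as two blocks of at least one 2-partition in $\mathcal{P}$ is at least $1 - \varepsilon$. -/
/-!
The proof is a union bound over the ordered pairs `(r, r')` of disjoint 2-element sets, of which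
there are at most `R²`.

By symmetry under permutations of the ground set (which act transitively on these pairs), every such
pair lies in the same number `A` of 2-partitions. With `n = 2k`, each of the `M` 2-partitions has `k`
blocks and thus contains `k(k-1)` ordered pairs of blocks, so double counting gives
`M k(k-1) = k(2k-1)(k-1)(2k-3) A`, whence `M = (n-1)(n-3) A ≤ n² A` (`card_le_sq_mul_card`).
A fixed pair is therefore missed by all `N` members of a random tuple with probability at most
`(1 - 1/n²)^N ≤ exp(-N/n²) ≤ ε/R²`, and summing over the pairs gives failure probability at most `ε`
(`union_bound`).
-/

/-- `P` is a 2-partition of the finite type `α`: a finite collection of 2-element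
subsets such that every element lies in exactly one block. -/
def IsPairPartition {α : Type*} (P : Finset (Finset α)) : Prop :=
  (∀ b ∈ P, b.card = 2) ∧ ∀ x : α, ∃! b, b ∈ P ∧ x ∈ b

open Finset in
/-- Union bound for `N` independent uniform samples `f i` from `X`: if each event `good d` has
probability at least `1/c`, then all the events `d ∈ D` are hit by some sample with probability at
least `1 - #D (1 - 1/c)^N`. The statement is multiplied out by the number of tuples. -/
lemma union_bound {X ι : Type*} [Fintype X] [DecidableEq X] (D : Finset ι)
    (good : ι → X → Prop) (c : ℝ) (hc : 0 < c) (N : ℕ)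
    (h : ∀ d ∈ D, (Nat.card X : ℝ) ≤ c * (Nat.card {x // good d x} : ℝ)) :
    (1 - #D * (1 - 1 / c) ^ N) * (Nat.card (Fin N → X) : ℝ) ≤
      (Nat.card {f : Fin N → X // ∀ d ∈ D, ∃ i, good d (f i)} : ℝ) := by
  classical
  simp only [Nat.card_eq_fintype_card, Fintype.card_subtype] at h ⊢
  have hcover : (univ : Finset (Fin N → X)) ⊆
      (univ.filter fun f : Fin N → X => ∀ d ∈ D, ∃ i, good d (f i)) ∪
        D.biUnion fun d => Fintype.piFinset fun _ : Fin N => univ.filter fun x => ¬ good d x := by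
    intro f _
    by_cases hf : ∀ d ∈ D, ∃ i, good d (f i)
    · exact mem_union_left _ (by simpa using hf)
    · push Not at hf
      obtain ⟨d, hd, hf⟩ := hf
      refine mem_union_right _ (mem_biUnion.2 ⟨d, hd, ?_⟩)
      simpa using hf
  have h1 := (card_le_card hcover).trans (card_union_le _ _)
  have h2 : (#(D.biUnion fun d => Fintype.piFinset fun _ : Fin N =>
      univ.filter fun x => ¬ good d x) : ℝ) ≤ #D * ((1 - 1 / c) ^ N * (Fintype.card X : ℝ) ^ N) := by
    have h3 : (#(D.biUnion fun d => Fintype.piFinset fun _ : Fin N =>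
        univ.filter fun x => ¬ good d x) : ℝ) ≤
        ∑ d ∈ D, (#(Fintype.piFinset fun _ : Fin N => univ.filter fun x => ¬ good d x) : ℝ) := by
      exact_mod_cast card_biUnion_le
    refine h3.trans ?_
    rw [← nsmul_eq_mul]
    refine sum_le_card_nsmul _ _ _ fun d hd => ?_
    rw [Fintype.card_piFinset_const, ← mul_pow]
    push_cast
    refine pow_le_pow_left₀ (by positivity) ?_ N
    have h4 : (#(univ.filter fun x => good d x) : ℝ) + #(univ.filter fun x => ¬ good d x)
        = Fintype.card X := by
      exact_mod_cast card_filter_add_card_filter_not (s := (univ : Finset X)) (good d)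
    have h5 : 1 / c * (Fintype.card X : ℝ) ≤ #(univ.filter fun x => good d x) := by
      rw [one_div, inv_mul_le_iff₀ hc]
      exact h d hd
    linarith
  have h6 : (Fintype.card (Fin N → X) : ℝ) = (Fintype.card X : ℝ) ^ N := by simp
  have h7 : (Fintype.card (Fin N → X) : ℝ) ≤
      #(univ.filter fun f : Fin N → X => ∀ d ∈ D, ∃ i, good d (f i)) +
      #(D.biUnion fun d => Fintype.piFinset fun _ : Fin N => univ.filter fun x => ¬ good d x) := by
    rw [← card_univ]
    exact_mod_cast h1
  rw [← h6] at h2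
  linarith

/-- The 2-partition `{0,1}, {2,3}, …` of `Fin n` for even `n`. -/
lemma exists_isPairPartition (n : ℕ) (heven : Even n) :
    ∃ P : Finset (Finset (Fin n)), IsPairPartition P := by
  classical
  obtain ⟨k, rfl⟩ := heven
  let σ : Fin (k + k) → Fin (k + k) := fun x =>
    ⟨if x.1 % 2 = 0 then x.1 + 1 else x.1 - 1, by split_ifs <;> omega⟩
  have hne : ∀ x, x ≠ σ x := by
    intro x h
    have := congrArg Fin.val h
    simp only [σ] at this
    split_ifs at this <;> omega
  have hinv : ∀ x, σ (σ x) = x := by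
    intro x
    apply Fin.ext
    simp only [σ]
    split_ifs <;> omega
  refine ⟨Finset.univ.image fun x => {x, σ x}, ?_, ?_⟩
  · intro b hb
    obtain ⟨x, -, rfl⟩ := Finset.mem_image.1 hb
    exact Finset.card_pair (hne x)
  · intro x
    refine ⟨{x, σ x}, ⟨Finset.mem_image_of_mem _ (Finset.mem_univ _), by simp⟩, ?_⟩
    rintro b ⟨hb, hx⟩
    obtain ⟨y, -, rfl⟩ := Finset.mem_image.1 hb
    rcases Finset.mem_insert.1 hx with rfl | hx
    · rfl
    · rw [Finset.mem_singleton.1 hx, hinv, Finset.pair_comm]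

lemma IsPairPartition.two_mul_card {n : ℕ} {P : Finset (Finset (Fin n))}
    (hP : IsPairPartition P) : P.card * 2 = n := by
  classical
  have h := Finset.sum_card (B := P) (n := 1) (fun a => by
    obtain ⟨b, hb, hu⟩ := hP.2 a
    rw [Finset.card_eq_one]
    refine ⟨b, ?_⟩
    ext c
    simp only [Finset.mem_filter, Finset.mem_singleton]
    exact ⟨fun hc => hu c hc, fun hc => hc ▸ hb⟩)
  rw [Finset.sum_const_nat hP.1] at h
  simpa using h

lemma IsPairPartition.disjoint {α : Type*} {P : Finset (Finset α)}
    (hP : IsPairPartition P) {r s : Finset α} (hr : r ∈ P) (hs : s ∈ P) (hne : r ≠ s) :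
    Disjoint r s := by
  rw [Finset.disjoint_left]
  intro x hxr hxs
  exact hne ((hP.2 x).unique ⟨hr, hxr⟩ ⟨hs, hxs⟩)

lemma IsPairPartition.map {α : Type*} {P : Finset (Finset α)}
    (hP : IsPairPartition P) (π : Equiv.Perm α) :
    IsPairPartition (P.map (Finset.mapEmbedding π.toEmbedding).toEmbedding) := by
  constructor
  · intro b hb
    obtain ⟨c, hc, rfl⟩ := Finset.mem_map.1 hb
    simpa using hP.1 c hc
  · intro x
    obtain ⟨b, ⟨hb, hxb⟩, hu⟩ := hP.2 (π.symm x)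
    refine ⟨b.map π.toEmbedding, ⟨Finset.mem_map.2 ⟨b, hb, rfl⟩, ?_⟩, ?_⟩
    · exact Finset.mem_map.2 ⟨_, hxb, by simp⟩
    · rintro c ⟨hc, hxc⟩
      obtain ⟨d, hd, rfl⟩ := Finset.mem_map.1 hc
      obtain ⟨y, hy, rfl⟩ := Finset.mem_map.1 (show x ∈ d.map π.toEmbedding from hxc)
      have := hu d ⟨hd, by simpa using hy⟩
      subst this
      rfl

/-- The symmetric group acts transitively on ordered pairs of disjoint 2-element sets. -/
lemma exists_perm_map_pair {α : Type*} [DecidableEq α] {r r' s s' : Finset α}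
    (hr : r.card = 2) (hr' : r'.card = 2) (hd : Disjoint r r')
    (hs : s.card = 2) (hs' : s'.card = 2) (hd' : Disjoint s s') :
    ∃ π : Equiv.Perm α, s.map π.toEmbedding = r ∧ s'.map π.toEmbedding = r' := by
  obtain ⟨a, b, hab, rfl⟩ := Finset.card_eq_two.1 hr
  obtain ⟨c, d, hcd, rfl⟩ := Finset.card_eq_two.1 hr'
  obtain ⟨a', b', hab', rfl⟩ := Finset.card_eq_two.1 hs
  obtain ⟨c', d', hcd', rfl⟩ := Finset.card_eq_two.1 hs'
  have emb : ∀ a b c d : α, a ≠ b → c ≠ d → Disjoint ({a, b} : Finset α) {c, d} →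
      Function.Injective ![a, b, c, d] := by
    intro a b c d hab hcd h
    simp only [Finset.disjoint_insert_left, Finset.disjoint_singleton_left, Finset.mem_insert,
      Finset.mem_singleton, not_or] at h
    obtain ⟨⟨h1, h2⟩, h3, h4⟩ := h
    intro i j hij
    fin_cases i <;> fin_cases j <;> simp_all [eq_comm]
  have := Equiv.Perm.isMultiplyPretransitive α 4
  obtain ⟨π, hπ⟩ := this.exists_smul_eq ⟨_, emb a' b' c' d' hab' hcd' hd'⟩
    ⟨_, emb a b c d hab hcd hd⟩
  have e := fun i : Fin 4 => DFunLike.congr_fun hπ i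
  have e0 : π a' = a := e 0
  have e1 : π b' = b := e 1
  have e2 : π c' = c := e 2
  have e3 : π d' = d := e 3
  exact ⟨π, by simp [Finset.map_insert, e0, e1], by simp [Finset.map_insert, e2, e3]⟩

/-- By symmetry, no pair of disjoint 2-element sets lies in more 2-partitions than another. -/
lemma card_containing_le {n : ℕ} {r r' s s' : Finset (Fin n)}
    (hr : r.card = 2) (hr' : r'.card = 2) (hd : Disjoint r r')
    (hs : s.card = 2) (hs' : s'.card = 2) (hd' : Disjoint s s') :
    Nat.card {P : {P : Finset (Finset (Fin n)) // IsPairPartition P} // s ∈ P.1 ∧ s' ∈ P.1} ≤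
    Nat.card {P : {P : Finset (Finset (Fin n)) // IsPairPartition P} // r ∈ P.1 ∧ r' ∈ P.1} := by
  obtain ⟨π, rfl, rfl⟩ := exists_perm_map_pair hr hr' hd hs hs' hd'
  refine Nat.card_le_card_of_injective
    (fun P => ⟨⟨_, P.1.2.map π⟩, Finset.mem_map.2 ⟨s, P.2.1, rfl⟩,
      Finset.mem_map.2 ⟨s', P.2.2, rfl⟩⟩) ?_
  intro P Q h
  have heq := congrArg (fun P => P.1.1) h
  exact Subtype.ext (Subtype.ext (Finset.map_injective _ heq))

/-- The ordered pairs of disjoint 2-element subsets of `Fin n`. -/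
def disjointPairs (n : ℕ) : Finset (Finset (Fin n) × Finset (Fin n)) :=
  (Finset.powersetCard 2 Finset.univ ×ˢ Finset.powersetCard 2 Finset.univ).filter
    fun p => Disjoint p.1 p.2

lemma mem_disjointPairs {n : ℕ} {p : Finset (Fin n) × Finset (Fin n)} :
    p ∈ disjointPairs n ↔ p.1.card = 2 ∧ p.2.card = 2 ∧ Disjoint p.1 p.2 := by
  simp [disjointPairs, Finset.mem_powersetCard, and_assoc]

lemma card_disjointPairs_le (n : ℕ) : (disjointPairs n).card ≤ n.choose 2 * n.choose 2 := by
  refine (Finset.card_filter_le _ _).trans ?_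
  simp

lemma card_disjointPairs (n : ℕ) :
    (disjointPairs n).card = n.choose 2 * (n - 2).choose 2 := by
  classical
  rw [disjointPairs, Finset.card_filter, Finset.sum_product]
  have : ∀ r ∈ Finset.powersetCard 2 (Finset.univ : Finset (Fin n)),
      (∑ s ∈ Finset.powersetCard 2 (Finset.univ : Finset (Fin n)),
        if Disjoint r s then 1 else 0) = (n - 2).choose 2 := by
    intro r hr
    rw [← Finset.card_filter]
    have h : (Finset.powersetCard 2 (Finset.univ : Finset (Fin n))).filter (Disjoint r) =
        Finset.powersetCard 2 rᶜ := by
      ext s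
      simp only [Finset.mem_filter, Finset.mem_powersetCard, Finset.subset_univ, true_and,
        Finset.subset_compl_iff_disjoint_left]
      tauto
    rw [h, Finset.card_powersetCard, Finset.card_compl, (Finset.mem_powersetCard.1 hr).2,
      Fintype.card_fin]
  rw [Finset.sum_const_nat this]
  simp

/-- A random 2-partition contains two given disjoint 2-element sets with probability at least
`1 / n²`. -/
lemma card_le_sq_mul_card {n : ℕ} (hn : 6 ≤ n) (heven : Even n) {r r' : Finset (Fin n)}
    (hr : r.card = 2) (hr' : r'.card = 2) (hd : Disjoint r r') :
    Nat.card {P : Finset (Finset (Fin n)) // IsPairPartition P} ≤ n ^ 2 *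
    Nat.card {P : {P : Finset (Finset (Fin n)) // IsPairPartition P} // r ∈ P.1 ∧ r' ∈ P.1} := by
  classical
  set A := Nat.card
    {P : {P : Finset (Finset (Fin n)) // IsPairPartition P} // r ∈ P.1 ∧ r' ∈ P.1} with hA
  set M := Nat.card {P : Finset (Finset (Fin n)) // IsPairPartition P} with hM
  obtain ⟨k, hk⟩ := heven
  -- Double counting of the incidences between 2-partitions and ordered pairs of blocks.
  have key : M * (k * k - k) ≤ (disjointPairs n).card * A := by
    have h1 := Finset.sum_card_bipartiteAbove_eq_sum_card_bipartiteBelow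
      (s := (Finset.univ : Finset {P : Finset (Finset (Fin n)) // IsPairPartition P}))
      (t := disjointPairs n) (fun P p => p.1 ∈ P.1 ∧ p.2 ∈ P.1)
    rw [Finset.sum_const_nat (m := k * k - k)] at h1
    · rw [hM, Nat.card_eq_fintype_card, ← Finset.card_univ, h1, ← smul_eq_mul]
      refine Finset.sum_le_card_nsmul _ _ _ fun p hp => ?_
      obtain ⟨hp1, hp2, hp3⟩ := mem_disjointPairs.1 hp
      have h2 := card_containing_le hr hr' hd hp1 hp2 hp3
      rw [← hA, Nat.card_eq_fintype_card, Fintype.card_subtype] at h2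
      exact h2
    · intro P _
      have hcard : P.1.card = k := by
        have := P.2.two_mul_card
        omega
      rw [← hcard, ← Finset.offDiag_card]
      congr 1
      ext p
      simp only [Finset.mem_bipartiteAbove, mem_disjointPairs, Finset.mem_offDiag]
      constructor
      · rintro ⟨⟨h1, -, h3⟩, h4, h5⟩
        refine ⟨h4, h5, fun h => ?_⟩
        rw [← h, disjoint_self] at h3
        simp [h3] at h1
      · rintro ⟨h1, h2, h3⟩
        exact ⟨⟨P.2.1 _ h1, P.2.1 _ h2, P.2.disjoint h1 h2 h3⟩, h1, h2⟩
  rw [card_disjointPairs] at key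
  obtain ⟨j, rfl⟩ : ∃ j, k = j + 2 := ⟨k - 2, by omega⟩
  have c1 : n.choose 2 = (j + 2) * (2 * j + 3) := by
    rw [Nat.choose_two_right, hk]
    apply Nat.div_eq_of_eq_mul_left (by norm_num)
    rw [show j + 2 + (j + 2) - 1 = 2 * j + 3 by omega]
    ring
  have c2 : (n - 2).choose 2 = (j + 1) * (2 * j + 1) := by
    rw [Nat.choose_two_right, hk]
    apply Nat.div_eq_of_eq_mul_left (by norm_num)
    rw [show j + 2 + (j + 2) - 2 - 1 = 2 * j + 1 by omega,
      show j + 2 + (j + 2) - 2 = 2 * j + 2 by omega]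
    ring
  have c3 : (j + 2) * (j + 2) - (j + 2) = (j + 2) * (j + 1) := by
    rw [Nat.sub_eq_iff_eq_add (by nlinarith)]
    ring
  rw [c1, c2, c3] at key
  have key2 : ((j + 2) * (j + 1)) * M ≤ ((j + 2) * (j + 1)) * ((2 * j + 3) * (2 * j + 1) * A) := by
    calc _ = M * ((j + 2) * (j + 1)) := by ring
      _ ≤ _ := key
      _ = _ := by ring
  have key3 := Nat.le_of_mul_le_mul_left key2 (by positivity)
  refine key3.trans (Nat.mul_le_mul_right _ ?_)
  rw [hk]
  nlinarith

/-- **Theorem 1 of the paper.** Let `n ≥ 6` be even, `R = n(n-1)/2`, `0 < ε < 1`.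
A family of `N` independent uniformly random 2-partitions of an `n`-element set is
modeled by the uniform distribution over tuples `f : Fin N → {2-partitions}`; the
probability that every pair of disjoint 2-element subsets appears as two blocks of at
least one member of the family is the proportion of such tuples. If
`N ≥ n²(2 log R - log ε)`, this probability is at least `1 - ε`. -/
theorem stmt_7 (n : ℕ) (hn : 6 ≤ n) (heven : Even n) (ε : ℝ) (hε : 0 < ε) (hε1 : ε < 1)
    (N : ℕ)
    (hN : (N : ℝ) ≥ (n : ℝ) ^ 2 *
      (2 * Real.log ((n : ℝ) * ((n : ℝ) - 1) / 2) - Real.log ε)) :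
    1 - ε ≤
      (Nat.card {f : Fin N → {P : Finset (Finset (Fin n)) // IsPairPartition P} //
          ∀ r r' : Finset (Fin n), r.card = 2 → r'.card = 2 → Disjoint r r' →
            ∃ i : Fin N, r ∈ (f i).1 ∧ r' ∈ (f i).1} : ℝ) /
        (Nat.card (Fin N → {P : Finset (Finset (Fin n)) // IsPairPartition P}) : ℝ) := by
  classical
  obtain ⟨P₀, hP₀⟩ := exists_isPairPartition n heven
  have : Nonempty {P : Finset (Finset (Fin n)) // IsPairPartition P} := ⟨⟨P₀, hP₀⟩⟩
  have hpos : (0 : ℝ) <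
      Nat.card (Fin N → {P : Finset (Finset (Fin n)) // IsPairPartition P}) := by
    exact_mod_cast Nat.card_pos
  have hn6 : (6 : ℝ) ≤ n := by exact_mod_cast hn
  have hub := union_bound (X := {P : Finset (Finset (Fin n)) // IsPairPartition P})
    (disjointPairs n) (fun p P => p.1 ∈ P.1 ∧ p.2 ∈ P.1) ((n : ℝ) ^ 2) (by positivity) N
    (fun p hp => by
      obtain ⟨h1, h2, h3⟩ := mem_disjointPairs.1 hp
      exact_mod_cast card_le_sq_mul_card hn heven h1 h2 h3)
  have hset : ∀ f : Fin N → {P : Finset (Finset (Fin n)) // IsPairPartition P},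
      (∀ p ∈ disjointPairs n, ∃ i, p.1 ∈ (f i).1 ∧ p.2 ∈ (f i).1) ↔
      ∀ r r' : Finset (Fin n), r.card = 2 → r'.card = 2 → Disjoint r r' →
            ∃ i : Fin N, r ∈ (f i).1 ∧ r' ∈ (f i).1 := by
    intro f
    simp only [mem_disjointPairs, Prod.forall, and_imp]
  simp only [hset] at hub
  rw [le_div_iff₀ hpos]
  refine le_trans (mul_le_mul_of_nonneg_right ?_ hpos.le) hub
  set R : ℝ := (n : ℝ) * ((n : ℝ) - 1) / 2 with hR
  have hRpos : 0 < R := by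
    have : (0 : ℝ) < (n : ℝ) - 1 := by linarith
    positivity
  have hD : ((disjointPairs n).card : ℝ) ≤ R ^ 2 := by
    have h : ((disjointPairs n).card : ℝ) ≤ (n.choose 2 : ℝ) * (n.choose 2 : ℝ) := by
      exact_mod_cast card_disjointPairs_le n
    rwa [Nat.cast_choose_two, ← hR, ← sq] at h
  have hbase : 0 ≤ 1 - 1 / (n : ℝ) ^ 2 := by
    rw [sub_nonneg, div_le_one (by positivity)]
    nlinarith
  have hexp : (1 - 1 / (n : ℝ) ^ 2) ^ N ≤ ε / R ^ 2 := by
    calc (1 - 1 / (n : ℝ) ^ 2) ^ N ≤ Real.exp (-(1 / (n : ℝ) ^ 2)) ^ N :=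
          pow_le_pow_left₀ hbase (Real.one_sub_le_exp_neg _) N
      _ = Real.exp (-(N / (n : ℝ) ^ 2)) := by
          rw [← Real.exp_nat_mul]
          ring_nf
      _ ≤ Real.exp (Real.log ε - 2 * Real.log R) := by
          rw [Real.exp_le_exp]
          have : 2 * Real.log R - Real.log ε ≤ N / (n : ℝ) ^ 2 := by
            rw [le_div_iff₀ (by positivity), mul_comm]
            exact hN
          linarith
      _ = ε / R ^ 2 := by
          rw [Real.exp_sub, Real.exp_log hε, two_mul, Real.exp_add, Real.exp_log hRpos, sq]
  have hfail : ((disjointPairs n).card : ℝ) * (1 - 1 / (n : ℝ) ^ 2) ^ N ≤ ε := by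
    calc _ ≤ R ^ 2 * (ε / R ^ 2) := mul_le_mul hD hexp (pow_nonneg hbase N) (by positivity)
      _ = ε := by field_simp
  linarith
end

section
/- Let $S_1, S_2, R_1, R_2$ be finite nonempty types and let $P$ be a probability mass function on $S_1 \times S_2 \times R_1 \times R_2$ such that every event of the form $\{\mathsf{S}_1 = k\}$, $\{\mathsf{S}_1 = k, \mathsf{S}_2 = l\}$, and $\{\mathsf{S}_1=k,\mathsf{S}_2=l,\mathsf{R}_2=j\}$ has positive probability. Then the following are equivalent: (a) for all $i \in R_1$, $j \in R_2$, $k \in S_1$, $l \in S_2$: $P(\mathsf{R}_1 = i \mid \mathsf{S}_1 = k, \mathsf{S}_2 = l, \mathsf{R}_2 = j) = P(\mathsf{R}_1 = i \mid \mathsf{S}_1 = k)$; (b) for all $i, j, k, l$: $P(\mathsf{R}_1 = i, \mathsf{R}_2 = j \mid \mathsf{S}_1 = k, \mathsf{S}_2 = l) = \Big(\sum_{z \in R_1} P(\mathsf{R}_1 = z, \mathsf{R}_2 = j \mid \mathsf{S}_1 = k, \mathsf{S}_2 = l)\Big) \cdot \Big(\sum_{n \in R_2}\sum_{m \in S_2}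 P(\mathsf{R}_1 = i, \mathsf{R}_2 = n \mid \mathsf{S}_1 = k, \mathsf{S}_2 = m)\, P(\mathsf{S}_2 = m \mid \mathsf{S}_1 = k)\Big)$. -/
/-!
The equivalence holds separately for each `(i, j, k, l)`. By the law of total probability over
`R₂` and `S₂`, the second factor in (b) is `P(R₁ = i | S₁ = k)`, and the first factor is the
marginal `P(R₂ = j | S₁ = k, S₂ = l)`. Since this marginal is positive, (b) is (a) multiplied
through by it.
-/

open Finset

/-- **Equivalence of the conditional-independence forms** (Appendix B.1). For a joint
distribution `P` over settings `(S₁,S₂)` and results `(R₁,R₂)` with all conditioning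
events `{S₁=k}`, `{S₁=k,S₂=l}`, `{S₁=k,S₂=l,R₂=j}` of positive probability, the
crosstalk-free condition (a) `P(R₁=i | S₁=k,S₂=l,R₂=j) = P(R₁=i | S₁=k)` is equivalent
to the boxed condition (b):
`P(R₁=i,R₂=j|S₁=k,S₂=l) = (∑_z P(R₁=z,R₂=j|S₁=k,S₂=l)) ·
(∑_{n,m} P(R₁=i,R₂=n|S₁=k,S₂=m) P(S₂=m|S₁=k))`. -/
theorem stmt_9 {S₁ S₂ R₁ R₂ : Type*}
    [Fintype S₁] [Fintype S₂] [Fintype R₁] [Fintype R₂]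
    [Nonempty S₁] [Nonempty S₂] [Nonempty R₁] [Nonempty R₂]
    (P : S₁ × S₂ × R₁ × R₂ → ℝ) (hP0 : ∀ t, 0 ≤ P t) (hP1 : ∑ t, P t = 1)
    (hposS₁ : ∀ k : S₁, 0 < ∑ l : S₂, ∑ i : R₁, ∑ j : R₂, P (k, l, i, j))
    (hposS₁S₂ : ∀ (k : S₁) (l : S₂), 0 < ∑ i : R₁, ∑ j : R₂, P (k, l, i, j))
    (hposS₁S₂R₂ : ∀ (k : S₁) (l : S₂) (j : R₂), 0 < ∑ i : R₁, P (k, l, i, j)) :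
    (∀ (i : R₁) (j : R₂) (k : S₁) (l : S₂),
        P (k, l, i, j) / (∑ z : R₁, P (k, l, z, j)) =
          (∑ l' : S₂, ∑ j' : R₂, P (k, l', i, j')) /
            (∑ l' : S₂, ∑ i' : R₁, ∑ j' : R₂, P (k, l', i', j'))) ↔
    (∀ (i : R₁) (j : R₂) (k : S₁) (l : S₂),
        P (k, l, i, j) / (∑ i' : R₁, ∑ j' : R₂, P (k, l, i', j')) =
          (∑ z : R₁, P (k, l, z, j) / (∑ i' : R₁, ∑ j' : R₂, P (k, l, i', j'))) *
            (∑ n : R₂, ∑ m : S₂,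
              (P (k, m, i, n) / (∑ i' : R₁, ∑ j' : R₂, P (k, m, i', j'))) *
                ((∑ i' : R₁, ∑ j' : R₂, P (k, m, i', j')) /
                  (∑ l' : S₂, ∑ i' : R₁, ∑ j' : R₂, P (k, l', i', j'))))) := by
  refine forall_congr' fun i => forall_congr' fun j => forall_congr' fun k =>
    forall_congr' fun l => ?_
  -- Law of total probability: the double sum in (b) is `P(R₁ = i | S₁ = k)`.
  have total : (∑ n : R₂, ∑ m : S₂,
      (P (k, m, i, n) / (∑ i' : R₁, ∑ j' : R₂, P (k, m, i', j'))) *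
        ((∑ i' : R₁, ∑ j' : R₂, P (k, m, i', j')) /
          (∑ l' : S₂, ∑ i' : R₁, ∑ j' : R₂, P (k, l', i', j')))) =
      (∑ l' : S₂, ∑ j' : R₂, P (k, l', i, j')) /
        (∑ l' : S₂, ∑ i' : R₁, ∑ j' : R₂, P (k, l', i', j')) := by
    simp_rw [div_mul_div_cancel₀ (hposS₁S₂ k _).ne', ← Finset.sum_div]
    rw [Finset.sum_comm]
  rw [total, ← Finset.sum_div]
  generalize (∑ l' : S₂, ∑ j' : R₂, P (k, l', i, j')) /
    (∑ l' : S₂, ∑ i' : R₁, ∑ j' : R₂, P (k, l', i', j')) = q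
  -- Multiplying by `P(R₂ = j | S₁ = k, S₂ = l) > 0` turns (a) at `(i, j, k, l)` into (b) there.
  rw [div_eq_iff (hposS₁S₂R₂ k l j).ne', div_eq_iff (hposS₁S₂ k l).ne', mul_right_comm,
    div_mul_cancel₀ _ (hposS₁S₂ k l).ne', mul_comm q]
end
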